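/- arXiv:1908.00367 — 8 statements merged into one kernel-verified Lean document; each statement's English description precedes it below -/
import Mathlib

section
/- In the abstract CRE setting, for every û ∈ V and every equilibrated flux p̂ ∈ S, E_CRE(û, p̂) = 2 ‖T u − p̂*‖, where p̂* = (p̂ + T û)/2 is the averaged flux. -/
open RealInnerProductSpace

/-- For every `uhat ∈ V` and every equilibrated flux `p ∈ S`,
`E_CRE(uhat, p) = 2 ‖T u − p*‖` where `p* = (p + T uhat)/2` is the averaged flux. -/
theorem cre_averaged_flux_identity
    {V W : Type*} [NormedAddCommGroup V] [InnerProductSpace ℝ V] [CompleteSpace V]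
    [NormedAddCommGroup W] [InnerProductSpace ℝ W] [CompleteSpace W]
    (T : V →L[ℝ] W) (F : V →L[ℝ] ℝ) (u : V)
    (hu : ∀ v : V, ⟪T u, T v⟫ = F v)
    (uhat : V) (p : W) (hp : ∀ v : V, ⟪p, T v⟫ = F v) :
    ‖p - T uhat‖ = 2 * ‖T u - (1 / 2 : ℝ) • (p + T uhat)‖ := by
  -- Since `p` and `T u` are both equilibrated, `p - T u` is orthogonal to the range of `T`.
  have orth : ⟪p - T u, T u - T uhat⟫ = 0 := by
    rw [← map_sub, inner_sub_left, hp, hu, sub_self]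
  -- Orthogonality makes the two diagonals `b + a` and `b - a` equal in length,
  -- where `b = p - T u` and `a = T u - T uhat`.
  have diag : ‖(p - T u) + (T u - T uhat)‖ = ‖(p - T u) - (T u - T uhat)‖ := by
    rw [← sq_eq_sq₀ (norm_nonneg _) (norm_nonneg _), norm_add_sq_real, norm_sub_sq_real (p - T u), orth]
    ring
  have two_smul_eq :
      (p - T u) - (T u - T uhat) = (-2 : ℝ) • (T u - (1 / 2 : ℝ) • (p + T uhat)) := by
    module
  rw [two_smul_eq, norm_smul, sub_add_sub_cancel] at diag
  simpa using diag
end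

section
/- (Guaranteed CRE bound, nonconforming case) In the abstract CRE setting, for every û ∈ V, every equilibrated flux p̂ ∈ S, and every g ∈ W (representing the broken flux A^ε ∇_H u^ε_H of a nonconforming approximation u^ε_H, with û the conforming post-processing û^ε_H), one has ‖T u − g‖ ≤ E_CRE(û, p̂) + ‖T û − g‖, which is the bound |||u^ε − u^ε_H|||_H ≤ E_CRE(û^ε_H, p̂) + |||û^ε_H − u^ε_H|||_H. -/
/-! The difference of fluxes `p - T u` is orthogonal to the range of `T`, since both fluxes are
equilibrated. Hence `T u` is the orthogonal projection of `p` onto (the closure of) that range, and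
`p - T uhat = (p - T u) + T (u - uhat)` is an orthogonal decomposition (Prager–Synge), so that
`‖T u - T uhat‖ ≤ ‖p - T uhat‖`. The triangle inequality through `T uhat` concludes. -/

open RealInnerProductSpace

/-- Guaranteed CRE bound, nonconforming case: for every `uhat ∈ V`, every equilibrated flux
`p ∈ S`, and every `g ∈ W` (the broken flux of a nonconforming approximation),
`‖T u − g‖ ≤ E_CRE(uhat, p) + ‖T uhat − g‖`. -/
theorem cre_energy_norm_bound_nonconforming
    {V W : Type*} [NormedAddCommGroup V] [InnerProductSpace ℝ V] [CompleteSpace V]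
    [NormedAddCommGroup W] [InnerProductSpace ℝ W] [CompleteSpace W]
    (T : V →L[ℝ] W) (F : V →L[ℝ] ℝ) (u : V)
    (hu : ∀ v : V, ⟪T u, T v⟫ = F v)
    (uhat : V) (p : W) (hp : ∀ v : V, ⟪p, T v⟫ = F v) (g : W) :
    ‖T u - g‖ ≤ ‖p - T uhat‖ + ‖T uhat - g‖ := by
  have horth : ⟪p - T u, T u - T uhat⟫ = 0 := by
    rw [← map_sub, inner_sub_left, hp, hu, sub_self]
  have hpyth := norm_add_sq_eq_norm_sq_add_norm_sq_of_inner_eq_zero (p - T u) (T u - T uhat) horth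
  rw [sub_add_sub_cancel] at hpyth
  have hconf : ‖T u - T uhat‖ ≤ ‖p - T uhat‖ := by
    refine (sq_le_sq₀ (norm_nonneg _) (norm_nonneg _)).mp ?_
    nlinarith [mul_self_nonneg ‖p - T u‖]
  calc ‖T u - g‖ ≤ ‖T u - T uhat‖ + ‖T uhat - g‖ := norm_sub_le_norm_sub_add_norm_sub _ _ _
    _ ≤ ‖p - T uhat‖ + ‖T uhat - g‖ := by gcongr
end

section
/- (Two-sided DWR bound under the saturation assumption) In the abstract CRE setting with a quantity of interest Q, let V_+ be a closed subspace of V, let û_H ∈ V_+, let u_+ ∈ V_+ satisfy ⟪T u_+, T v⟫ = F(v) for all v ∈ V_+, and let ũ_+ ∈ V_+ satisfy ⟪T ũ_+, T v⟫ = Q(v) for all v ∈ V_+. Assume the saturation assumption: there is β with 0 ≤ β < 1 such that |Q(u) − Q(u_+)| ≤ β |Q(u) − Q(û_H)|. Then |R(ũ_+)|/(1 + β) ≤ |Q(u) − Q(û_H)| ≤ |R(ũ_+)|/(1 − β), where R(v) = F(v) − ⟪T û_H, T v⟫. -/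
open RealInnerProductSpace

/-- Two-sided DWR bound under the saturation assumption:
`|R(utplus)|/(1 + β) ≤ |Q(u) − Q(uhatH)| ≤ |R(utplus)|/(1 − β)` where
`R(v) = F(v) − ⟪T uhatH, T v⟫`. -/
theorem dwr_two_sided_bound_saturation
    {V W : Type*} [NormedAddCommGroup V] [InnerProductSpace ℝ V] [CompleteSpace V]
    [NormedAddCommGroup W] [InnerProductSpace ℝ W] [CompleteSpace W]
    (T : V →L[ℝ] W) (F : V →L[ℝ] ℝ) (u : V)
    (hu : ∀ v : V, ⟪T u, T v⟫ = F v)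
    (Q : V →L[ℝ] ℝ)
    (Vplus : Submodule ℝ V) (hVplus : IsClosed (Vplus : Set V))
    (uhatH : V) (huhatH : uhatH ∈ Vplus)
    (uplus : V) (huplusmem : uplus ∈ Vplus)
    (huplus : ∀ v ∈ Vplus, ⟪T uplus, T v⟫ = F v)
    (utplus : V) (hutplusmem : utplus ∈ Vplus)
    (hutplus : ∀ v ∈ Vplus, ⟪T utplus, T v⟫ = Q v)
    (β : ℝ) (hβ0 : 0 ≤ β) (hβ1 : β < 1)
    (hsat : |Q u - Q uplus| ≤ β * |Q u - Q uhatH|) :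
    |F utplus - ⟪T uhatH, T utplus⟫| / (1 + β) ≤ |Q u - Q uhatH| ∧
      |Q u - Q uhatH| ≤ |F utplus - ⟪T uhatH, T utplus⟫| / (1 - β) := by
  -- Galerkin identity: the residual at the discrete dual solution is `Q uplus - Q uhatH`.
  have key : F utplus - ⟪T uhatH, T utplus⟫ = Q uplus - Q uhatH := by
    rw [← huplus utplus hutplusmem, ← hutplus uplus huplusmem, ← hutplus uhatH huhatH,
      real_inner_comm (T utplus) (T uplus), real_inner_comm (T utplus) (T uhatH)]
  rw [key, div_le_iff₀ (by linarith), le_div_iff₀ (by linarith)]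
  have h₁ := abs_sub_le (Q uplus) (Q u) (Q uhatH)
  have h₂ := abs_sub_le (Q u) (Q uplus) (Q uhatH)
  rw [abs_sub_comm (Q uplus) (Q u)] at h₁
  constructor <;> linarith
end

section
/- (Guaranteed goal-oriented CRE bound) In the abstract CRE setting with a quantity of interest Q and adjoint solution ũ, for every û, w ∈ V, every primal equilibrated flux p̂ ∈ S, and every adjoint equilibrated flux p̃ ∈ S̃, one has |Q(u) − Q(û) − R(w)| ≤ E_CRE(û, p̂) · E_CRE(w, p̃), where R(v) = F(v) − ⟪T û, T v⟫ and E_CRE(û, p̂) = ‖p̂ − T û‖. -/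
/-!
Since `pt` is an adjoint equilibrated flux, `Q (u - uhat) = ⟪pt, T (u - uhat)⟫`, while the residual
is `R w = ⟪T w, T (u - uhat)⟫`. The quantity to bound is therefore `⟪pt - T w, T (u - uhat)⟫`, and
Cauchy–Schwarz together with the Prager–Synge inequality `energy_error_le_cre` gives the claim.
-/

open RealInnerProductSpace

/-- Prager–Synge inequality: `p - T u` is orthogonal to the range of `T`, so by Pythagoras the
energy error of `uhat` is at most its constitutive relation error. -/
theorem energy_error_le_cre
    {V W : Type*} [NormedAddCommGroup V] [InnerProductSpace ℝ V]
    [NormedAddCommGroup W] [InnerProductSpace ℝ W]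
    (T : V →L[ℝ] W) (u uhat : V) (p : W) (h : ∀ v : V, ⟪p, T v⟫ = ⟪T u, T v⟫) :
    ‖T (u - uhat)‖ ≤ ‖p - T uhat‖ := by
  have horth : ⟪p - T u, T (u - uhat)⟫ = 0 := by
    rw [inner_sub_left, h, sub_self]
  have hsplit : p - T uhat = (p - T u) + T (u - uhat) := by
    rw [map_sub]; abel
  have hpyth := norm_add_sq_eq_norm_sq_add_norm_sq_of_inner_eq_zero _ _ horth
  rw [← hsplit] at hpyth
  exact abs_le_of_sq_le_sq' (by nlinarith [mul_self_nonneg ‖p - T u‖]) (norm_nonneg _) |>.2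

/-- Guaranteed goal-oriented CRE bound: for every `uhat, w ∈ V`, every primal equilibrated
flux `p ∈ S` and every adjoint equilibrated flux `pt ∈ S̃`,
`|Q(u) − Q(uhat) − R(w)| ≤ E_CRE(uhat, p) · E_CRE(w, pt)` where
`R(v) = F(v) − ⟪T uhat, T v⟫` and `E_CRE(uhat, p) = ‖p − T uhat‖`. -/
theorem goal_oriented_cre_bound
    {V W : Type*} [NormedAddCommGroup V] [InnerProductSpace ℝ V] [CompleteSpace V]
    [NormedAddCommGroup W] [InnerProductSpace ℝ W] [CompleteSpace W]
    (T : V →L[ℝ] W) (F : V →L[ℝ] ℝ) (u : V)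
    (hu : ∀ v : V, ⟪T u, T v⟫ = F v)
    (Q : V →L[ℝ] ℝ) (ut : V) (hut : ∀ v : V, ⟪T ut, T v⟫ = Q v)
    (uhat w : V)
    (p : W) (hp : ∀ v : V, ⟪p, T v⟫ = F v)
    (pt : W) (hpt : ∀ v : V, ⟪pt, T v⟫ = Q v) :
    |Q u - Q uhat - (F w - ⟪T uhat, T w⟫)| ≤ ‖p - T uhat‖ * ‖pt - T w‖ := by
  have hrepr : Q u - Q uhat - (F w - ⟪T uhat, T w⟫) = ⟪T (u - uhat), pt - T w⟫ := by
    rw [inner_sub_right, real_inner_comm pt, hpt, map_sub, map_sub, inner_sub_left, hu]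
  rw [hrepr]
  exact (abs_real_inner_le_norm _ _).trans <| by
    gcongr
    exact energy_error_le_cre T u uhat p fun v => (hp v).trans (hu v).symm
end

section
/- (Corrected error representation with averaged flux) In the abstract CRE setting with a quantity of interest Q, for every û, w ∈ V, every p̂ ∈ S, and every p̃ ∈ S̃, one has the identity Q(u) − Q(û) − C̄ = ⟪T u − p̂*, p̃ − T w⟫, where p̂* = (p̂ + T û)/2 and C̄ = (1/2) ⟪p̂ − T û, p̃ + T w⟫; in particular C̄ is a fully computable correction term. -/
open RealInnerProductSpace

/-- Corrected error representation with averaged flux: for every `uhat, w ∈ V`, `p ∈ S`,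
`pt ∈ S̃`, one has `Q(u) − Q(uhat) − C̄ = ⟪T u − p*, pt − T w⟫`, where
`p* = (p + T uhat)/2` and `C̄ = (1/2) ⟪p − T uhat, pt + T w⟫`. -/
theorem goal_error_corrected_representation
    {V W : Type*} [NormedAddCommGroup V] [InnerProductSpace ℝ V] [CompleteSpace V]
    [NormedAddCommGroup W] [InnerProductSpace ℝ W] [CompleteSpace W]
    (T : V →L[ℝ] W) (F : V →L[ℝ] ℝ) (u : V)
    (hu : ∀ v : V, ⟪T u, T v⟫ = F v)
    (Q : V →L[ℝ] ℝ)
    (uhat w : V)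
    (p : W) (hp : ∀ v : V, ⟪p, T v⟫ = F v)
    (pt : W) (hpt : ∀ v : V, ⟪pt, T v⟫ = Q v) :
    Q u - Q uhat - (1 / 2 : ℝ) * ⟪p - T uhat, pt + T w⟫ =
      ⟪T u - (1 / 2 : ℝ) • (p + T uhat), pt - T w⟫ := by
  -- Equilibration turns every pairing with the range of `T` into a value of `F` or `Q`.
  have h1 : ⟪T u, pt⟫ = Q u := by rw [real_inner_comm, hpt]
  have h2 : ⟪T uhat, pt⟫ = Q uhat := by rw [real_inner_comm, hpt]
  simp only [inner_sub_left, inner_sub_right, inner_add_left, inner_add_right,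
    real_inner_smul_left, h1, h2, hu, hp]
  ring
end

section
/- (Improved goal-oriented CRE bound with factor 1/2) In the abstract CRE setting with a quantity of interest Q, for every û, w ∈ V, every p̂ ∈ S, and every p̃ ∈ S̃, one has |Q(u) − Q(û) − C̄| ≤ (1/2) E_CRE(û, p̂) · E_CRE(w, p̃), where C̄ = (1/2) ⟪p̂ − T û, p̃ + T w⟫ and E_CRE(û, p̂) = ‖p̂ − T û‖. -/
/-!
The proof is the Prager–Synge hypercircle argument. Since `p - T u` is orthogonal to the range
of `T`, the flux `T u` lies on the sphere with diameter `[T uhat, p]`, so its distance to the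
midpoint `(p + T uhat) / 2` equals `‖p - T uhat‖ / 2`. The corrected error in the quantity of
interest is exactly the inner product of `T u - (p + T uhat) / 2` with `pt - T w`, and
Cauchy–Schwarz yields the factor `1 / 2`.
-/

open RealInnerProductSpace

/-- Improved goal-oriented CRE bound with factor 1/2: for every `uhat, w ∈ V`, `p ∈ S`,
`pt ∈ S̃`, one has `|Q(u) − Q(uhat) − C̄| ≤ (1/2) E_CRE(uhat, p) · E_CRE(w, pt)` where
`C̄ = (1/2) ⟪p − T uhat, pt + T w⟫` and `E_CRE(uhat, p) = ‖p − T uhat‖`. -/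
theorem goal_oriented_cre_bound_half_factor
    {V W : Type*} [NormedAddCommGroup V] [InnerProductSpace ℝ V] [CompleteSpace V]
    [NormedAddCommGroup W] [InnerProductSpace ℝ W] [CompleteSpace W]
    (T : V →L[ℝ] W) (F : V →L[ℝ] ℝ) (u : V)
    (hu : ∀ v : V, ⟪T u, T v⟫ = F v)
    (Q : V →L[ℝ] ℝ)
    (uhat w : V)
    (p : W) (hp : ∀ v : V, ⟪p, T v⟫ = F v)
    (pt : W) (hpt : ∀ v : V, ⟪pt, T v⟫ = Q v) :
    |Q u - Q uhat - (1 / 2 : ℝ) * ⟪p - T uhat, pt + T w⟫| ≤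
      (1 / 2 : ℝ) * (‖p - T uhat‖ * ‖pt - T w‖) := by
  -- Galerkin-type orthogonality: `p - T u` is orthogonal to the range of `T`.
  have horth (v : V) : ⟪p, T v⟫ = ⟪T u, T v⟫ := (hp v).trans (hu v).symm
  -- `T u` is on the sphere with diameter `[T uhat, p]` (distances doubled).
  have hnorm : ‖(2 : ℝ) • T u - (p + T uhat)‖ = ‖p - T uhat‖ := by
    have h1 := horth u
    have h2 := horth uhat
    rw [← sq_eq_sq₀ (norm_nonneg _) (norm_nonneg _), ← real_inner_self_eq_norm_sq,
      ← real_inner_self_eq_norm_sq]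
    simp only [inner_sub_left, inner_sub_right, inner_add_left, inner_add_right,
      real_inner_smul_left, real_inner_smul_right, real_inner_comm p (T u),
      real_inner_comm p (T uhat), real_inner_comm (T u) (T uhat)] at h1 h2 ⊢
    linarith [real_inner_comm p (T u), real_inner_comm p (T uhat),
      real_inner_comm (T u) (T uhat)]
  have hrepr : Q u - Q uhat - (1 / 2 : ℝ) * ⟪p - T uhat, pt + T w⟫ =
      (1 / 2 : ℝ) * ⟪(2 : ℝ) • T u - (p + T uhat), pt - T w⟫ := by
    rw [← hpt u, ← hpt uhat]
    simp only [inner_sub_left, inner_sub_right, inner_add_left, inner_add_right,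
      real_inner_smul_left]
    linarith [horth w, real_inner_comm pt (T u), real_inner_comm pt (T uhat)]
  rw [hrepr, abs_mul, abs_of_pos (by norm_num : (0 : ℝ) < 1 / 2), ← hnorm]
  gcongr
  exact abs_real_inner_le_norm _ _
end

section
/- (Computable upper bound η^Q on the goal-oriented error) In the abstract CRE setting with a quantity of interest Q, for every û, w ∈ V, every p̂ ∈ S, and every p̃ ∈ S̃, one has |Q(u) − Q(û)| ≤ η^Q := max over θ ∈ {−1, +1} of |C̄ + (θ/2) E_CRE(û, p̂) · E_CRE(w, p̃)|, where C̄ = (1/2) ⟪p̂ − T û, p̃ + T w⟫ and E_CRE(û, p̂) = ‖p̂ − T û‖; equivalently, |Q(u) − Q(û)| ≤ max(|C̄ + X|, |C̄ − X|) with X = (1/2)‖p̂ − T û‖ · ‖p̃ − T w‖. -/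
/-!
Write `a = p - T uhat`, `d = T (u - uhat)` and `r = p - T u`, so `a = r + d`. Both `T u` and `p`
are equilibrated, hence `r` is orthogonal to the range of `T`; in particular `d - r` and
`d + r = a` have the same norm (Prager–Synge). Since `Q u - Q uhat = ⟪pt, d⟫` and
`⟪T w, r⟫ = 0`, the error differs from `C̄ = (1/2) ⟪a, pt + T w⟫` by exactly
`(1/2) ⟪pt - T w, d - r⟫`, which Cauchy–Schwarz bounds by `X = (1/2) ‖a‖ ‖pt - T w‖`. Thus the
error lies in `[C̄ - X, C̄ + X]`, and the absolute value on an interval is maximal at an endpoint.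
-/

open RealInnerProductSpace

/-- Computable upper bound `η^Q` on the goal-oriented error:
`|Q(u) − Q(uhat)| ≤ η^Q = max_{θ = ±1} |C̄ + (θ/2) E_CRE(uhat,p) E_CRE(w,pt)|
= max (|C̄ + X|) (|C̄ − X|)` with `C̄ = (1/2) ⟪p − T uhat, pt + T w⟫` and
`X = (1/2) ‖p − T uhat‖ ‖pt − T w‖`. -/
theorem goal_oriented_eta_Q_bound
    {V W : Type*} [NormedAddCommGroup V] [InnerProductSpace ℝ V] [CompleteSpace V]
    [NormedAddCommGroup W] [InnerProductSpace ℝ W] [CompleteSpace W]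
    (T : V →L[ℝ] W) (F : V →L[ℝ] ℝ) (u : V)
    (hu : ∀ v : V, ⟪T u, T v⟫ = F v)
    (Q : V →L[ℝ] ℝ)
    (uhat w : V)
    (p : W) (hp : ∀ v : V, ⟪p, T v⟫ = F v)
    (pt : W) (hpt : ∀ v : V, ⟪pt, T v⟫ = Q v) :
    |Q u - Q uhat| ≤
      max |(1 / 2 : ℝ) * ⟪p - T uhat, pt + T w⟫ + (1 / 2 : ℝ) * (‖p - T uhat‖ * ‖pt - T w‖)|
          |(1 / 2 : ℝ) * ⟪p - T uhat, pt + T w⟫ - (1 / 2 : ℝ) * (‖p - T uhat‖ * ‖pt - T w‖)| := by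
  have orth : ∀ v : V, ⟪p - T u, T v⟫ = 0 := fun v => by
    rw [inner_sub_left, hp, hu, sub_self]
  set r := p - T u with hr
  set d := T (u - uhat) with hd
  have ha : p - T uhat = d + r := by
    rw [hd, hr, map_sub]
    abel
  have hQ : Q u - Q uhat = ⟪pt, d⟫ := by
    rw [← map_sub, hpt]
  have hnorm : ‖d - r‖ = ‖d + r‖ := norm_sub_eq_norm_add (orth _)
  rw [ha, hQ]
  have key : ⟪pt, d⟫ - 1 / 2 * ⟪d + r, pt + T w⟫ = 1 / 2 * ⟪pt - T w, d - r⟫ := by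
    have h₁ := orth w
    have h₂ := real_inner_comm pt d
    have h₃ := real_inner_comm pt r
    have h₄ := real_inner_comm (T w) d
    have h₅ := real_inner_comm (T w) r
    simp only [inner_add_left, inner_add_right, inner_sub_left, inner_sub_right]
    linarith
  have cs := abs_le.1 (abs_real_inner_le_norm (pt - T w) (d - r))
  rw [hnorm, mul_comm] at cs
  rw [max_comm]
  apply abs_le_max_abs_abs <;> linarith [cs.1, cs.2]
end

section
/- (Sharp bound with handbook enrichment of the adjoint) In the abstract CRE setting with a quantity of interest Q, let z ∈ V (the handbook enrichment), let r̃ ∈ W satisfy the residual equilibration ⟪r̃, T v⟫ = Q(v) − ⟪T z, T v⟫ for all v ∈ V, and let w_res ∈ V (the approximate residual adjoint solution). Set p̃₊ = T z + r̃ and w₊ = z + w_res. Then p̃₊ ∈ S̃, E_CRE(w₊, p̃₊) = E_CRE(w_res, r̃) = ‖r̃ − T w_res‖, and for every û ∈ V and every p̂ ∈ S one has |Q(u) − Q(û) − C̄₊| ≤ (1/2) E_CRE(û, p̂) · ‖r̃ − T w_res‖, where C̄₊ = (1/2) ⟪p̂ − T û, p̃₊ + T w₊⟫. -/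
/-!
Write `q = T z + rt`, `t = T (z + wres)`, `e = T u - T uhat` and `f = p - T u`. Since `p` and `T u`
represent the same functional `F` on the range of `T`, the vector `f` is orthogonal to that range.
As `Q` is represented by `q`, we have `Q u - Q uhat = ⟪e, q⟫`, and `⟪f, t⟫ = 0` turns the error into
`⟪e, q⟫ - (1/2) ⟪e + f, q + t⟫ = (1/2) ⟪e - f, q - t⟫`. Cauchy–Schwarz and the Prager–Synge
identity `‖e - f‖ = ‖e + f‖ = ‖p - T uhat‖` (from `⟪e, f⟫ = 0`) give the constant `1/2`,
and `q - t = rt - T wres`.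
-/

open RealInnerProductSpace

/-- Sharp bound with handbook enrichment of the adjoint: with `z` the handbook enrichment,
`rt` an equilibrated residual flux (`⟪rt, T v⟫ = Q v − ⟪T z, T v⟫` for all `v`) and `wres`
the approximate residual adjoint solution, setting `ptplus = T z + rt` and
`wplus = z + wres`, one has `ptplus ∈ S̃`, `E_CRE(wplus, ptplus) = ‖rt − T wres‖`, and for
every `uhat ∈ V` and `p ∈ S`,
`|Q(u) − Q(uhat) − C̄₊| ≤ (1/2) E_CRE(uhat, p) ‖rt − T wres‖` where
`C̄₊ = (1/2) ⟪p − T uhat, ptplus + T wplus⟫`. -/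
theorem goal_oriented_handbook_enrichment_bound
    {V W : Type*} [NormedAddCommGroup V] [InnerProductSpace ℝ V] [CompleteSpace V]
    [NormedAddCommGroup W] [InnerProductSpace ℝ W] [CompleteSpace W]
    (T : V →L[ℝ] W) (F : V →L[ℝ] ℝ) (u : V)
    (hu : ∀ v : V, ⟪T u, T v⟫ = F v)
    (Q : V →L[ℝ] ℝ)
    (z : V) (rt : W) (hrt : ∀ v : V, ⟪rt, T v⟫ = Q v - ⟪T z, T v⟫)
    (wres : V) :
    (∀ v : V, ⟪T z + rt, T v⟫ = Q v) ∧
      ‖(T z + rt) - T (z + wres)‖ = ‖rt - T wres‖ ∧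
      ∀ (uhat : V) (p : W), (∀ v : V, ⟪p, T v⟫ = F v) →
        |Q u - Q uhat -
            (1 / 2 : ℝ) * ⟪p - T uhat, (T z + rt) + T (z + wres)⟫| ≤
          (1 / 2 : ℝ) * (‖p - T uhat‖ * ‖rt - T wres‖) := by
  have hq : ∀ v : V, ⟪T z + rt, T v⟫ = Q v := fun v => by
    rw [inner_add_left, hrt]; ring
  have hqt : (T z + rt) - T (z + wres) = rt - T wres := by
    rw [map_add]; abel
  refine ⟨hq, by rw [hqt], fun uhat p hp => ?_⟩
  have hf : ∀ v : V, ⟪p - T u, T v⟫ = 0 := fun v => by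
    rw [inner_sub_left, hp, hu, sub_self]
  have horth : ⟪p - T u, T u - T uhat⟫ = 0 := by
    rw [← map_sub, hf]
  have hnorm : ‖(T u - T uhat) - (p - T u)‖ = ‖p - T uhat‖ := by
    have h : p - T uhat = (T u - T uhat) + (p - T u) := by abel
    rw [h]
    exact norm_sub_eq_norm_add (𝕜 := ℝ) horth
  have hid : Q u - Q uhat - (1 / 2 : ℝ) * ⟪p - T uhat, (T z + rt) + T (z + wres)⟫ =
      (1 / 2 : ℝ) * ⟪(T u - T uhat) - (p - T u), rt - T wres⟫ := by
    have ht := hf (z + wres)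
    rw [← hq u, ← hq uhat, ← hqt, real_inner_comm (T u), real_inner_comm (T uhat)]
    simp only [inner_sub_left, inner_sub_right, inner_add_right] at ht ⊢
    linarith
  rw [hid, abs_mul, abs_of_pos (by norm_num : (0 : ℝ) < 1 / 2), ← hnorm]
  gcongr
  exact abs_real_inner_le_norm _ _
end
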